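/- There are universal constants c > 0 and c₃ > 0 such that the following holds. Let (X, y) be a λ-anisotropic subgaussian sample of size n in dimension d, and let (x′, y′) be a λ-anisotropic subgaussian sample of size 1 in dimension d, independent of (X, y); set K = X Xᵀ. For any δ ∈ (0, 1/2), if d_∞ ≥ c₃ (n + log(1/δ)), then with probability at least 1 − δ, K is invertible and |yᵀ (K⁻¹ − ‖λ‖₁⁻¹ I_n) X x′| ≤ c √(n log(1/δ) / d_∞) · ( √((n + log(1/δ))/d₂) + (n + log(1/δ))/d_∞ ). -/

import Mathlib

open MeasureTheory ProbabilityTheory Matrix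

noncomputable section

/-- `(X, y)` (with underlying matrix `Z` of independent, mean-zero, unit-variance,
1-subgaussian entries) is a `lam`-anisotropic subgaussian sample: `X = Z diag(lam)^{1/2}`. -/
structure IsAnisoSample {Ω : Type*} [MeasurableSpace Ω] (μ : Measure Ω)
    {n d : ℕ} (lam : Fin d → ℝ)
    (Z X : Ω → Matrix (Fin n) (Fin d) ℝ) (y : Fin n → ℝ) : Prop where
  lam_pos : ∀ j, 0 < lam j
  labels : ∀ i, y i = 1 ∨ y i = -1
  meas : ∀ i j, Measurable fun ω => Z ω i j
  indep : iIndepFun (fun (p : Fin n × Fin d) ω => Z ω p.1 p.2) μ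
  mean_zero : ∀ i j, ∫ ω, Z ω i j ∂μ = 0
  var_one : ∀ i j, ∫ ω, (Z ω i j) ^ 2 ∂μ = 1
  subg_int : ∀ i j (t : ℝ), Integrable (fun ω => Real.exp (t * Z ω i j)) μ
  subg : ∀ i j (t : ℝ), ∫ ω, Real.exp (t * Z ω i j) ∂μ ≤ Real.exp (t ^ 2 / 2)
  X_eq : ∀ ω i j, X ω i j = Real.sqrt (lam j) * Z ω i j

/-- ℓ₂ dimension proxy `d₂ = ‖λ‖₁²/‖λ‖₂²`. -/
def dim2 {d : ℕ} (lam : Fin d → ℝ) : ℝ := (∑ j, lam j) ^ 2 / ∑ j, (lam j) ^ 2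

/-- ℓ∞ dimension proxy `d∞ = ‖λ‖₁/‖λ‖∞`. -/
def dimInf {d : ℕ} (lam : Fin d → ℝ) : ℝ := (∑ j, lam j) / ⨆ j, lam j

theorem aux_gauss_lint (b : ℝ) (hb : 0 < b) :
    ∫⁻ x : ℝ, ENNReal.ofReal (Real.exp (-b * x ^ 2)) = ENNReal.ofReal (Real.sqrt (Real.pi / b)) := by
  rw [← integral_gaussian b, ofReal_integral_eq_lintegral_ofReal (integrable_exp_neg_mul_sq hb)]
  exact ae_of_all _ fun x => (Real.exp_pos _).le

theorem aux_exp_sq {Ω : Type*} [MeasurableSpace Ω] {μ : Measure Ω} [IsProbabilityMeasure μ]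
    {g : Ω → ℝ} (hm : Measurable g) (hg : HasSubgaussianMGF g 1 μ) :
    ∫⁻ ω, ENNReal.ofReal (Real.exp (g ω ^ 2 / 4)) ∂μ ≤ ENNReal.ofReal (Real.sqrt 2) := by
  have h1 : ∀ ω, ∫⁻ x : ℝ, ENNReal.ofReal (Real.exp (x * g ω - x ^ 2)) =
      ENNReal.ofReal (Real.exp (g ω ^ 2 / 4)) * ENNReal.ofReal (Real.sqrt Real.pi) := by
    intro ω
    have := aux_gauss_lint 1 one_pos
    rw [div_one] at this
    rw [← this, ← lintegral_sub_right_eq_self (fun x => ENNReal.ofReal (Real.exp (-1 * x ^ 2))) (g ω / 2), ← lintegral_const_mul _ (by fun_prop)]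
    congr 1; ext x
    rw [← ENNReal.ofReal_mul (Real.exp_pos _).le, ← Real.exp_add]
    congr 2; ring
  have h2 : ∫⁻ x : ℝ, ∫⁻ ω, ENNReal.ofReal (Real.exp (x * g ω - x ^ 2)) ∂μ ≤
      ENNReal.ofReal (Real.sqrt (Real.pi / (1/2))) := by
    rw [← aux_gauss_lint (1/2) (by norm_num)]
    refine lintegral_mono fun x => ?_
    have h3 := hg.mgf_le x
    have h4 := hg.integrable_exp_mul x
    have : ∀ ω, ENNReal.ofReal (Real.exp (x * g ω - x ^ 2)) =
        ENNReal.ofReal (Real.exp (x * g ω)) * ENNReal.ofReal (Real.exp (-x ^ 2)) := by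
      intro ω
      rw [← ENNReal.ofReal_mul (Real.exp_pos _).le, ← Real.exp_add]; rfl
    simp_rw [this]
    rw [lintegral_mul_const _ (by fun_prop),
      ← ofReal_integral_eq_lintegral_ofReal h4 (ae_of_all _ fun x => (Real.exp_pos _).le),
      ← ENNReal.ofReal_mul (integral_nonneg fun x => (Real.exp_pos _).le)]
    apply ENNReal.ofReal_le_ofReal
    unfold mgf at h3
    calc _ ≤ Real.exp ((1 : NNReal) * x ^ 2 / 2) * Real.exp (-x ^ 2) := by gcongr
      _ = _ := by rw [← Real.exp_add]; congr 1; push_cast; ring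
  rw [lintegral_lintegral_swap (by fun_prop)] at h2
  simp_rw [h1] at h2
  rw [lintegral_mul_const _ (by fun_prop)] at h2
  have h5 : Real.sqrt (Real.pi / (1/2)) = Real.sqrt 2 * Real.sqrt Real.pi := by
    rw [← Real.sqrt_mul (by norm_num)]; congr 1; ring
  rw [h5, ENNReal.ofReal_mul (Real.sqrt_nonneg _)] at h2
  have hp : 0 < Real.sqrt Real.pi := Real.sqrt_pos.2 Real.pi_pos
  exact (ENNReal.mul_le_mul_iff_left (by simpa using Real.pi_pos) ENNReal.ofReal_ne_top).1 h2

theorem aux_exp_sq_int {Ω : Type*} [MeasurableSpace Ω] {μ : Measure Ω} [IsProbabilityMeasure μ]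
    {g : Ω → ℝ} (hm : Measurable g) (hg : HasSubgaussianMGF g 1 μ) :
    Integrable (fun ω => Real.exp (g ω ^ 2 / 4)) μ ∧
      ∫ ω, Real.exp (g ω ^ 2 / 4) ∂μ ≤ Real.sqrt 2 := by
  have h := aux_exp_sq hm hg
  have hi : Integrable (fun ω => Real.exp (g ω ^ 2 / 4)) μ := by
    refine ⟨by fun_prop, ?_⟩
    rw [hasFiniteIntegral_iff_ofReal (ae_of_all _ fun x => (Real.exp_pos _).le)]
    exact h.trans_lt ENNReal.ofReal_lt_top
  refine ⟨hi, ?_⟩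
  rw [← ofReal_integral_eq_lintegral_ofReal hi (ae_of_all _ fun x => (Real.exp_pos _).le)] at h
  exact (ENNReal.ofReal_le_ofReal_iff (Real.sqrt_nonneg _)).1 h

theorem aux_exp_taylor (x : ℝ) : Real.exp x ≤ 1 + x + x ^ 2 * Real.exp |x| := by
  have h := Complex.norm_exp_sub_sum_le_norm_mul_exp (x : ℂ) 2
  simp only [Finset.sum_range_succ, Finset.sum_range_zero] at h
  have e : Complex.exp (x : ℂ) - (0 + (x : ℂ) ^ 0 / (Nat.factorial 0 : ℂ) +
      (x : ℂ) ^ 1 / (Nat.factorial 1 : ℂ)) = ((Real.exp x - 1 - x : ℝ) : ℂ) := by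
    push_cast; simp; ring
  rw [e, Complex.norm_real, Complex.norm_real, Real.norm_eq_abs, Real.norm_eq_abs, sq_abs] at h
  linarith [le_abs_self (Real.exp x - 1 - x)]

theorem aux_exp_pt (θ u : ℝ) (hθ : |θ| ≤ 1/8) :
    Real.exp (θ * (u ^ 2 - 1)) ≤
      1 + θ * (u ^ 2 - 1) + 128 * θ ^ 2 * (Real.exp (1/4) * Real.exp (u ^ 2 / 4)) := by
  have h1 := aux_exp_taylor (θ * (u ^ 2 - 1))
  set v := |u ^ 2 - 1| with hv
  have hv0 : 0 ≤ v := abs_nonneg _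
  have hvu : v ≤ u ^ 2 + 1 := by
    rw [hv, abs_le]; constructor <;> nlinarith [sq_nonneg u]
  have h2 : |θ * (u ^ 2 - 1)| ≤ v / 8 := by
    rw [abs_mul, ← hv]; nlinarith
  have h3 : (v / 8) ^ 2 / 2 ≤ Real.exp (v / 8) := by
    have := Real.quadratic_le_exp_of_nonneg (x := v / 8) (by positivity)
    linarith
  have h4 : (θ * (u ^ 2 - 1)) ^ 2 = θ ^ 2 * v ^ 2 := by rw [hv, sq_abs]; ring
  have h5 : Real.exp |θ * (u ^ 2 - 1)| ≤ Real.exp (v / 8) := Real.exp_le_exp.2 h2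
  have h6 : v ^ 2 ≤ 128 * Real.exp (v / 8) := by nlinarith
  have h7 : Real.exp (v / 8) * Real.exp (v / 8) ≤ Real.exp (1/4) * Real.exp (u ^ 2 / 4) := by
    rw [← Real.exp_add, ← Real.exp_add]
    apply Real.exp_le_exp.2; linarith
  have h8 : (θ * (u ^ 2 - 1)) ^ 2 * Real.exp |θ * (u ^ 2 - 1)| ≤
      128 * θ ^ 2 * (Real.exp (v / 8) * Real.exp (v / 8)) := by
    rw [h4]
    calc θ ^ 2 * v ^ 2 * Real.exp |θ * (u ^ 2 - 1)|
        ≤ θ ^ 2 * (128 * Real.exp (v / 8)) * Real.exp (v / 8) := by gcongr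
      _ = _ := by ring
  have h9 : 128 * θ ^ 2 * (Real.exp (v / 8) * Real.exp (v / 8)) ≤
      128 * θ ^ 2 * (Real.exp (1/4) * Real.exp (u ^ 2 / 4)) := by gcongr
  linarith

theorem aux_sq_mgf {Ω : Type*} [MeasurableSpace Ω] {μ : Measure Ω} [IsProbabilityMeasure μ]
    {g : Ω → ℝ} (hm : Measurable g) (hg : HasSubgaussianMGF g 1 μ)
    (hv : ∫ ω, g ω ^ 2 ∂μ = 1) (θ : ℝ) (hθ : |θ| ≤ 1/8) :
    Integrable (fun ω => Real.exp (θ * (g ω ^ 2 - 1))) μ ∧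
      ∫ ω, Real.exp (θ * (g ω ^ 2 - 1)) ∂μ ≤ Real.exp (256 * θ ^ 2) := by
  obtain ⟨hi, hb⟩ := aux_exp_sq_int hm hg
  have hg2 : Integrable (fun ω => g ω ^ 2) μ := by
    by_contra h
    rw [integral_undef h] at hv; norm_num at hv
  have hI : Integrable (fun ω => 1 + θ * (g ω ^ 2 - 1) +
      128 * θ ^ 2 * (Real.exp (1/4) * Real.exp (g ω ^ 2 / 4))) μ := by
    refine Integrable.add (Integrable.add (integrable_const _) ?_) ?_
    · exact (hg2.sub (integrable_const _)).const_mul _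
    · exact (hi.const_mul _).const_mul _
  have hE : Integrable (fun ω => Real.exp (θ * (g ω ^ 2 - 1))) μ := by
    refine hI.mono' (by fun_prop) (ae_of_all _ fun ω => ?_)
    rw [Real.norm_eq_abs, abs_of_pos (Real.exp_pos _)]
    exact aux_exp_pt θ _ hθ
  refine ⟨hE, ?_⟩
  have h1 := integral_mono hE hI fun ω => aux_exp_pt θ (g ω) hθ
  have h2 : ∫ ω, (1 + θ * (g ω ^ 2 - 1) +
      128 * θ ^ 2 * (Real.exp (1/4) * Real.exp (g ω ^ 2 / 4))) ∂μ =
      1 + 128 * θ ^ 2 * (Real.exp (1/4) * ∫ ω, Real.exp (g ω ^ 2 / 4) ∂μ) := by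
    have i1 : Integrable (fun ω => g ω ^ 2 - 1) μ := hg2.sub (integrable_const _)
    have i2 : Integrable (fun ω => 1 + θ * (g ω ^ 2 - 1)) μ :=
      (integrable_const _).add (i1.const_mul _)
    rw [integral_add i2 ((hi.const_mul _).const_mul _),
      integral_add (integrable_const _) (i1.const_mul _), integral_const_mul, integral_const_mul,
      integral_const_mul, integral_sub hg2 (integrable_const _), hv]
    simp
  have h3 : Real.exp (1/4) * Real.sqrt 2 ≤ 2 := by
    have e1 : Real.exp (1/4) ^ 4 ≤ 4 := by
      rw [← Real.exp_nat_mul]; norm_num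
      linarith [Real.exp_one_lt_three]
    have e0 := Real.exp_pos (1/4)
    have e2 : Real.exp (1/4) ^ 2 ≤ 2 := by nlinarith
    have s2 : Real.sqrt 2 ^ 2 = 2 := Real.sq_sqrt (by norm_num)
    have : (Real.exp (1/4) * Real.sqrt 2) ^ 2 ≤ 2 ^ 2 := by rw [mul_pow]; nlinarith
    exact (abs_le_of_sq_le_sq' this (by norm_num)).2
  have h4 : Real.exp (1/4) * ∫ ω, Real.exp (g ω ^ 2 / 4) ∂μ ≤ 2 :=
    le_trans (by gcongr) h3
  have h5 : 128 * θ ^ 2 * (Real.exp (1/4) * ∫ ω, Real.exp (g ω ^ 2 / 4) ∂μ) ≤ 128 * θ ^ 2 * 2 := by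
    gcongr
  have h6 := Real.add_one_le_exp (256 * θ ^ 2)
  linarith

theorem aux_group {Ω ι κ : Type*} [MeasurableSpace Ω] [Fintype ι] [Fintype κ] {μ : Measure Ω}
    [IsProbabilityMeasure μ] (Z : ι → κ → Ω → ℝ) (hm : ∀ i j, Measurable (Z i j))
    (h : iIndepFun (fun (p : ι × κ) ω => Z p.1 p.2 ω) μ) :
    iIndepFun (fun (j : κ) ω (i : ι) => Z i j ω) μ := by
  let X : (j : κ) → (i : ι) → Ω → ℝ := fun j i => Z i j
  have mX : ∀ j i, Measurable (X j i) := fun j i => hm i j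
  have h1 : iIndepFun (fun (p : (_ : κ) × ι) ω => X p.1 p.2 ω) μ := by
    have := h.precomp (g := fun p : (_ : κ) × ι => (p.2, p.1)) (by
      rintro ⟨a, b⟩ ⟨c, d⟩ h; simp at h; simp [h.1, h.2])
    exact this
  have h2 : ∀ j, iIndepFun (X j) μ := by
    intro j
    have := h.precomp (g := fun i : ι => (i, j)) (by
      intro a b h; simpa using h)
    exact this
  have : ∀ i j, IsProbabilityMeasure (μ.map (X i j)) :=
    fun i j ↦ Measure.isProbabilityMeasure_map (mX i j).aemeasurable
  have : ∀ i, IsProbabilityMeasure (μ.map (fun ω ↦ (X i · ω))) :=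
    fun i ↦ Measure.isProbabilityMeasure_map (Measurable.aemeasurable (by fun_prop))
  have e : (MeasurableEquiv.piCurry (fun (_ : κ) (_ : ι) => ℝ)) ∘ (fun ω p ↦ X p.1 p.2 ω)
      = fun ω i j ↦ X i j ω := by
    ext; simp [Sigma.curry]
  change iIndepFun (fun j ω => (X j · ω)) μ
  rw [iIndepFun_iff_map_fun_eq_infinitePi_map (by fun_prop)]
  rw [iIndepFun_iff_map_fun_eq_infinitePi_map (by fun_prop)] at h1
  rw [← e, ← Measure.map_map (by fun_prop) (by fun_prop), h1,
    Measure.infinitePi_map_piCurry (fun i j ↦ μ.map (X i j))]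
  congr 1; ext1 i
  rw [(iIndepFun_iff_map_fun_eq_infinitePi_map (by fun_prop)).1 (h2 i)]

theorem aux_bernstein {Ω κ : Type*} [MeasurableSpace Ω] [Fintype κ] {μ : Measure Ω}
    [IsProbabilityMeasure μ] (G : κ → Ω → ℝ) (hm : ∀ j, Measurable (G j))
    (hind : iIndepFun G μ) (hG : ∀ j, HasSubgaussianMGF (G j) 1 μ)
    (hv : ∀ j, ∫ ω, G j ω ^ 2 ∂μ = 1) (lam : κ → ℝ) (M V t σ : ℝ) (hM : 0 < M) (hV : 0 < V)
    (ht : 0 < t) (hσ : |σ| = 1)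
    (hl0 : ∀ j, 0 < lam j) (hlM : ∀ j, lam j ≤ M) (hVe : V = ∑ j, lam j ^ 2) :
    μ.real {ω | 2056 * (Real.sqrt (V * t) + M * t) ≤ σ * ∑ j, lam j * (G j ω ^ 2 - 1)} ≤
      Real.exp (-t) := by
  set r := 2056 * (Real.sqrt (V * t) + M * t) with hr
  set θ := min (Real.sqrt (t / V)) (1 / (8 * M)) with hθ
  have hθ0 : 0 < θ := lt_min (Real.sqrt_pos.2 (by positivity)) (by positivity)
  have hθ1 : θ ^ 2 * V ≤ t := by
    have : θ ^ 2 ≤ t / V := by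
      rw [← Real.sq_sqrt (show 0 ≤ t / V by positivity)]
      exact pow_le_pow_left₀ hθ0.le (min_le_left _ _) 2
    calc θ ^ 2 * V ≤ t / V * V := by gcongr
      _ = t := by field_simp
  have hθ2 : θ * M ≤ 1 / 8 := by
    calc θ * M ≤ 1 / (8 * M) * M := by gcongr; exact min_le_right _ _
      _ = 1 / 8 := by field_simp
  have hθr : 257 * t ≤ θ * r := by
    rcases min_choice (Real.sqrt (t / V)) (1 / (8 * M)) with h | h
    · have : Real.sqrt (t / V) * Real.sqrt (V * t) = t := by
        rw [← Real.sqrt_mul (by positivity)]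
        rw [show t / V * (V * t) = t ^ 2 by field_simp]
        exact Real.sqrt_sq ht.le
      rw [hr, hθ, h]
      have h2 : 0 ≤ Real.sqrt (t / V) * (M * t) := by positivity
      nlinarith
    · rw [hr, hθ, h]
      have : 1 / (8 * M) * (M * t) = t / 8 := by field_simp
      have h2 : 0 ≤ 1 / (8 * M) * Real.sqrt (V * t) := by positivity
      nlinarith
  let X : κ → Ω → ℝ := fun j ω => σ * (lam j * (G j ω ^ 2 - 1))
  have hX : iIndepFun X μ :=
    hind.comp (fun j x => σ * (lam j * (x ^ 2 - 1))) (fun j => by fun_prop)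
  have hXm : ∀ j, Measurable (X j) := fun j => by
    have := hm j; fun_prop
  have hmgf : ∀ j, Integrable (fun ω => Real.exp (θ * X j ω)) μ ∧
      mgf (X j) μ θ ≤ Real.exp (256 * θ ^ 2 * lam j ^ 2) := by
    intro j
    have := aux_sq_mgf (hm j) (hG j) (hv j) (θ * σ * lam j) (by
      rw [abs_mul, abs_mul, hσ, mul_one, abs_of_pos hθ0, abs_of_pos (hl0 j)]
      exact (mul_le_mul_of_nonneg_left (hlM j) hθ0.le).trans hθ2)
    have e : ∀ ω, θ * X j ω = θ * σ * lam j * (G j ω ^ 2 - 1) := fun ω => by simp only [X]; ring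
    unfold mgf
    simp_rw [e]
    refine ⟨this.1, this.2.trans_eq ?_⟩
    congr 1
    rw [mul_pow, mul_pow, ← sq_abs σ, hσ]; ring
  have hs := hX.mgf_sum (t := θ) hXm Finset.univ
  have hi := hX.integrable_exp_mul_sum (t := θ) hXm (s := Finset.univ) fun j _ => (hmgf j).1
  have hc := measure_ge_le_exp_mul_mgf (X := ∑ j, X j) r hθ0.le hi
  have e : {ω | r ≤ σ * ∑ j, lam j * (G j ω ^ 2 - 1)} = {ω | r ≤ (∑ j, X j) ω} := by
    ext ω; simp [X, Finset.mul_sum]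
  rw [e]
  refine hc.trans ?_
  rw [hs]
  have : ∏ j, mgf (X j) μ θ ≤ Real.exp (256 * t) := by
    calc ∏ j, mgf (X j) μ θ ≤ ∏ j, Real.exp (256 * θ ^ 2 * lam j ^ 2) :=
          Finset.prod_le_prod (fun j _ => mgf_nonneg) fun j _ => (hmgf j).2
      _ = Real.exp (256 * (θ ^ 2 * V)) := by
          rw [← Real.exp_sum, ← Finset.mul_sum, hVe]; ring_nf
      _ ≤ _ := Real.exp_le_exp.2 (by linarith)
  calc _ ≤ Real.exp (-θ * r) * Real.exp (256 * t) := by gcongr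
    _ = Real.exp (-θ * r + 256 * t) := (Real.exp_add _ _).symm
    _ ≤ _ := Real.exp_le_exp.2 (by linarith)

/-- linear combination of independent subgaussian variables -/
theorem aux_lin {Ω ι : Type*} [MeasurableSpace Ω] [Fintype ι] {μ : Measure Ω}
    [IsProbabilityMeasure μ] (Z : ι → Ω → ℝ)
    (hind : iIndepFun Z μ) (hZ : ∀ j, HasSubgaussianMGF (Z j) 1 μ) (u : ι → ℝ) :
    HasSubgaussianMGF (fun ω => ∑ i, u i * Z i ω) (Real.toNNReal (∑ i, u i ^ 2)) μ := by
  have hi : iIndepFun (fun i ω => u i * Z i ω) μ :=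
    hind.comp (fun i x => u i * x) (fun i => by fun_prop)
  have := HasSubgaussianMGF.sum_of_iIndepFun hi (s := Finset.univ)
    (fun i _ => (hZ i).const_mul (u i))
  convert this using 1
  apply NNReal.eq
  rw [Real.coe_toNNReal _ (Finset.sum_nonneg fun i _ => sq_nonneg _)]
  rw [NNReal.coe_sum]
  refine Finset.sum_congr rfl fun i _ => ?_
  change u i ^ 2 = u i ^ 2 * 1
  ring

theorem aux_lin_var {Ω ι : Type*} [MeasurableSpace Ω] [Fintype ι] {μ : Measure Ω}
    [IsProbabilityMeasure μ] (Z : ι → Ω → ℝ)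
    (hind : iIndepFun Z μ) (hZ : ∀ j, HasSubgaussianMGF (Z j) 1 μ)
    (h0 : ∀ i, ∫ ω, Z i ω ∂μ = 0) (h1 : ∀ i, ∫ ω, Z i ω ^ 2 ∂μ = 1) (u : ι → ℝ) :
    ∫ ω, (∑ i, u i * Z i ω) ^ 2 ∂μ = ∑ i, u i ^ 2 := by
  have hi : iIndepFun (fun i ω => u i * Z i ω) μ :=
    hind.comp (fun i x => u i * x) (fun i => by fun_prop)
  have hL : ∀ i, MemLp (fun ω => u i * Z i ω) 2 μ := fun i => by
    have := (hZ i).memLp 2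
    exact this.const_mul (u i)
  have hv := IndepFun.variance_sum (X := fun i ω => u i * Z i ω) (s := Finset.univ) (μ := μ)
    (fun i _ => hL i) (fun i _ j _ hij => hi.indepFun hij)
  have hm : ∫ ω, (∑ i, fun ω => u i * Z i ω) ω ∂μ = 0 := by
    simp only [Finset.sum_apply]
    rw [integral_finsetSum _ fun i _ => (hZ i).integrable.const_mul _]
    simp [integral_const_mul, h0]
  rw [variance_of_integral_eq_zero _ hm] at hv
  · simp only [Finset.sum_apply] at hv
    rw [hv]
    congr 1; ext i
    rw [variance_of_integral_eq_zero]
    · simp_rw [mul_pow]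
      rw [integral_const_mul, h1, mul_one]
    · exact (hL i).1.aemeasurable
    · rw [integral_const_mul, h0, mul_zero]
  · exact (memLp_finsetSum' _ fun i _ => hL i).1.aemeasurable

theorem aux_net (n : ℕ) : ∃ N : Finset (EuclideanSpace ℝ (Fin n)), N.card ≤ 5 ^ n ∧
    (∀ p ∈ N, ‖p‖ = 1) ∧ ∀ x : EuclideanSpace ℝ (Fin n), ‖x‖ = 1 → ∃ p ∈ N, ‖x - p‖ ≤ 1 / 2 := by
  classical
  let good : Finset (EuclideanSpace ℝ (Fin n)) → Prop := fun s =>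
    (∀ c ∈ s, ‖c‖ = 2) ∧ ∀ c ∈ s, ∀ d ∈ s, c ≠ d → 1 ≤ ‖c - d‖
  have hgood : ∀ s, good s → s.card ≤ 5 ^ n := by
    intro s hs
    have := Besicovitch.card_le_of_separated s (fun c hc => (hs.1 c hc).le) hs.2
    simpa using this
  let P : ℕ → Prop := fun k => ∃ s, good s ∧ s.card = k
  have h0 : P 0 := ⟨∅, by simp [good], rfl⟩
  obtain ⟨s, hs, hk⟩ := Nat.findGreatest_spec (P := P) (Nat.zero_le (5 ^ n)) h0
  refine ⟨s.image (fun c => (1/2 : ℝ) • c), Finset.card_image_le.trans (hgood s hs), ?_, ?_⟩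
  · intro p hp
    obtain ⟨c, hc, rfl⟩ := Finset.mem_image.1 hp
    rw [norm_smul, hs.1 c hc]; norm_num
  · intro x hx
    by_contra hcon
    push Not at hcon
    have hfar : ∀ c ∈ s, 1 < ‖(2 : ℝ) • x - c‖ := by
      intro c hc
      have := hcon _ (Finset.mem_image_of_mem _ hc)
      have e : (2 : ℝ) • x - c = (2 : ℝ) • (x - (1/2 : ℝ) • c) := by
        rw [smul_sub, smul_smul]; norm_num
      rw [e, norm_smul, Real.norm_eq_abs, abs_of_pos (by norm_num : (0:ℝ) < 2)]
      linarith
    have hnot : (2 : ℝ) • x ∉ s := by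
      intro h
      have := hfar _ h
      simp at this; linarith
    have hg : good (insert ((2 : ℝ) • x) s) := by
      constructor
      · intro c hc
        rcases Finset.mem_insert.1 hc with rfl | hc
        · rw [norm_smul, hx]; norm_num
        · exact hs.1 c hc
      · intro c hc d hd hcd
        rcases Finset.mem_insert.1 hc with rfl | hc <;> rcases Finset.mem_insert.1 hd with rfl | hd
        · exact absurd rfl hcd
        · exact (hfar d hd).le
        · rw [norm_sub_rev]; exact (hfar c hc).le
        · exact hs.2 c hc d hd hcd
    have hc := Finset.card_insert_of_notMem hnot
    have hP : P (s.card + 1) := ⟨_, hg, hc⟩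
    have hle : s.card + 1 ≤ 5 ^ n := hc ▸ hgood _ hg
    exact Nat.findGreatest_is_greatest (P := P) (by rw [← hk]; exact Nat.lt_succ_self _) hle hP

theorem aux_polar {E : Type*} [NormedAddCommGroup E] [InnerProductSpace ℝ E] (T : E →L[ℝ] E)
    (hT : ∀ x y, inner ℝ (T x) y = inner ℝ x (T y)) (M : ℝ)
    (hM : ∀ x, |inner ℝ (T x) x| ≤ M * ‖x‖ ^ 2) (x y : E) :
    |inner ℝ (T x) y| ≤ M * (‖x‖ * ‖y‖) := by
  have key : ∀ u v, 4 * |inner ℝ (T u) v| ≤ 2 * M * (‖u‖ ^ 2 + ‖v‖ ^ 2) := by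
    intro u v
    have e : 4 * inner ℝ (T u) v = inner ℝ (T (u + v)) (u + v) - inner ℝ (T (u - v)) (u - v) := by
      have : inner ℝ (T v) u = inner ℝ (T u) v := by rw [hT, real_inner_comm]
      simp only [map_add, map_sub, inner_add_left, inner_add_right, inner_sub_left,
        inner_sub_right, this]
      ring
    have h1 := hM (u + v)
    have h2 := hM (u - v)
    have h3 := parallelogram_law_with_norm ℝ u v
    have : 4 * |inner ℝ (T u) v| = |4 * inner ℝ (T u) v| := by
      rw [abs_mul, abs_of_pos (by norm_num : (0:ℝ) < 4)]
    rw [this, e]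
    calc _ ≤ _ := abs_sub _ _
      _ ≤ M * ‖u + v‖ ^ 2 + M * ‖u - v‖ ^ 2 := add_le_add h1 h2
      _ = _ := by rw [← mul_add]; linear_combination M * h3
  by_cases hx : x = 0
  · simp [hx]
  by_cases hy : y = 0
  · simp [hy]
  have hx' := norm_pos_iff.2 hx
  have hy' := norm_pos_iff.2 hy
  have h := key (‖y‖ • x) (‖x‖ • y)
  rw [map_smul, inner_smul_left, inner_smul_right, norm_smul, norm_smul, abs_mul, abs_mul] at h
  simp only [norm_norm, conj_trivial, abs_norm] at h
  have hxy : 0 < ‖x‖ * ‖y‖ := mul_pos hx' hy'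
  have : (‖x‖ * ‖y‖) * |inner ℝ (T x) y| ≤ (‖x‖ * ‖y‖) * (M * (‖x‖ * ‖y‖)) := by nlinarith
  exact le_of_mul_le_mul_left this hxy

theorem aux_net_bound {n : ℕ} (hn : 0 < n) (N : Finset (EuclideanSpace ℝ (Fin n)))
    (hN1 : ∀ p ∈ N, ‖p‖ = 1)
    (hN : ∀ x : EuclideanSpace ℝ (Fin n), ‖x‖ = 1 → ∃ p ∈ N, ‖x - p‖ ≤ 1 / 2)
    (T : EuclideanSpace ℝ (Fin n) →L[ℝ] EuclideanSpace ℝ (Fin n))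
    (hT : ∀ x y, inner ℝ (T x) y = inner ℝ x (T y)) (ρ : ℝ)
    (hρ : ∀ p ∈ N, |inner ℝ (T p) p| ≤ ρ) (x y : EuclideanSpace ℝ (Fin n)) :
    |inner ℝ (T x) y| ≤ 33 * ρ * (‖x‖ * ‖y‖) := by
  have : Nonempty (Fin n) := ⟨⟨0, hn⟩⟩
  have hne : (Metric.sphere (0 : EuclideanSpace ℝ (Fin n)) 1).Nonempty :=
    NormedSpace.sphere_nonempty.2 zero_le_one
  obtain ⟨x0, hx0, hmax⟩ := (isCompact_sphere (0 : EuclideanSpace ℝ (Fin n)) 1).exists_isMaxOn hne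
    (f := fun x => |inner ℝ (T x) x|) (by fun_prop)
  have hx0' : ‖x0‖ = 1 := by simpa using hx0
  set M := |inner ℝ (T x0) x0| with hMdef
  have hM0 : 0 ≤ M := abs_nonneg _
  have hM : ∀ x, |inner ℝ (T x) x| ≤ M * ‖x‖ ^ 2 := by
    intro x
    by_cases hx : x = 0
    · simp [hx]
    have hxp := norm_pos_iff.2 hx
    have h := hmax (show ‖x‖⁻¹ • x ∈ Metric.sphere (0 : EuclideanSpace ℝ (Fin n)) 1 by
      simp [norm_smul, hxp.ne'])
    simp only [Set.mem_ofPred_eq] at h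
    rw [map_smul, inner_smul_left, inner_smul_right, abs_mul, abs_mul] at h
    simp only [conj_trivial, abs_inv, abs_norm] at h
    have e : |inner ℝ (T x) x| = (‖x‖⁻¹ * (‖x‖⁻¹ * |inner ℝ (T x) x|)) * ‖x‖ ^ 2 := by
      field_simp
    rw [e]
    exact mul_le_mul_of_nonneg_right h (by positivity)
  have hpol := aux_polar T hT M hM
  have hMρ : M ≤ 33 * ρ := by
    obtain ⟨p, hp, hd⟩ := hN x0 hx0'
    have h1 := hpol (x0 - p) (x0 + p)
    have e : inner ℝ (T (x0 - p)) (x0 + p) = inner ℝ (T x0) x0 - inner ℝ (T p) p := by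
      have : inner ℝ (T p) x0 = inner ℝ (T x0) p := by rw [hT, real_inner_comm]
      simp only [map_sub, inner_add_right, inner_sub_left, this]
      ring
    have h2 := parallelogram_law_with_norm ℝ x0 p
    rw [hx0', hN1 p hp] at h2
    have h3 : ‖x0 - p‖ * ‖x0 + p‖ ≤ 32 / 33 := by
      have ha := norm_nonneg (x0 - p)
      refine (abs_le_of_sq_le_sq' ?_ (by norm_num)).2
      have : ‖x0 + p‖ ^ 2 = 4 - ‖x0 - p‖ ^ 2 := by nlinarith
      rw [mul_pow, this]
      have hs : ‖x0 - p‖ ^ 2 ≤ 1/4 := by nlinarith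
      nlinarith [sq_nonneg ‖x0 - p‖]
    have h4 : M * (‖x0 - p‖ * ‖x0 + p‖) ≤ M * (32 / 33) := mul_le_mul_of_nonneg_left h3 hM0
    rw [e] at h1
    have h5 := abs_sub_abs_le_abs_sub (inner ℝ (T x0) x0) (inner ℝ (T p) p)
    have h6 := hρ p hp
    linarith
  exact (hpol x y).trans (mul_le_mul_of_nonneg_right hMρ (by positivity))

theorem aux_net_matrix {n : ℕ} (hn : 0 < n) (N : Finset (EuclideanSpace ℝ (Fin n)))
    (hN1 : ∀ p ∈ N, ‖p‖ = 1)
    (hN : ∀ x : EuclideanSpace ℝ (Fin n), ‖x‖ = 1 → ∃ p ∈ N, ‖x - p‖ ≤ 1 / 2)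
    (A : Matrix (Fin n) (Fin n) ℝ) (hA : Aᵀ = A) (ρ : ℝ)
    (hρ : ∀ p ∈ N, |(p.ofLp) ⬝ᵥ (A *ᵥ p.ofLp)| ≤ ρ) (u v : Fin n → ℝ) :
    |u ⬝ᵥ (A *ᵥ v)| ≤ 33 * ρ * (Real.sqrt (u ⬝ᵥ u) * Real.sqrt (v ⬝ᵥ v)) := by
  have hin : ∀ x y : EuclideanSpace ℝ (Fin n),
      inner ℝ (Matrix.toEuclideanCLM (𝕜 := ℝ) A x) y = y.ofLp ⬝ᵥ (A *ᵥ x.ofLp) := by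
    intro x y
    rw [EuclideanSpace.inner_eq_star_dotProduct]
    simp
  have hsym : ∀ x y : Fin n → ℝ, y ⬝ᵥ (A *ᵥ x) = x ⬝ᵥ (A *ᵥ y) := by
    intro x y
    rw [dotProduct_comm, dotProduct_mulVec x, ← mulVec_transpose, hA]
  have h := aux_net_bound hn N hN1 hN (Matrix.toEuclideanCLM (𝕜 := ℝ) A) (by
      intro x y
      rw [hin, real_inner_comm, hin, hsym]) ρ (by
      intro p hp; rw [hin]; exact hρ p hp) (WithLp.toLp 2 v) (WithLp.toLp 2 u)
  rw [hin] at h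
  have hnorm : ∀ w : Fin n → ℝ, ‖WithLp.toLp 2 w‖ = Real.sqrt (w ⬝ᵥ w) := by
    intro w
    rw [EuclideanSpace.norm_eq]
    congr 1
    simp [dotProduct, sq]
  rw [hnorm, hnorm, mul_comm (Real.sqrt (v ⬝ᵥ v))] at h
  exact h

theorem aux_det {n d : ℕ} (X : Matrix (Fin n) (Fin d) ℝ) (L η : ℝ) (hL : 0 < L) (hη0 : 0 ≤ η)
    (hη : η ≤ 1 / 2) (y : Fin n → ℝ)
    (hA : ∀ u v : Fin n → ℝ, |u ⬝ᵥ ((L⁻¹ • (X * Xᵀ) - 1) *ᵥ v)| ≤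
      η * (Real.sqrt (u ⬝ᵥ u) * Real.sqrt (v ⬝ᵥ v))) :
    IsUnit (X * Xᵀ).det ∧
      let w := Xᵀ *ᵥ (((X * Xᵀ)⁻¹ - L⁻¹ • (1 : Matrix (Fin n) (Fin n) ℝ)) *ᵥ y)
      w ⬝ᵥ w ≤ 2 * η ^ 2 * (y ⬝ᵥ y) / L := by
  set K := X * Xᵀ with hK
  have hnn : ∀ u : Fin n → ℝ, 0 ≤ u ⬝ᵥ u := fun u => Finset.sum_nonneg fun i _ => mul_self_nonneg _
  have hAv : ∀ u v : Fin n → ℝ, u ⬝ᵥ (K *ᵥ v) =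
      L * (u ⬝ᵥ v + u ⬝ᵥ ((L⁻¹ • K - 1) *ᵥ v)) := by
    intro u v
    rw [sub_mulVec, smul_mulVec, one_mulVec, dotProduct_sub, dotProduct_smul, smul_eq_mul]
    field_simp; ring
  have hlow : ∀ u : Fin n → ℝ, L / 2 * (u ⬝ᵥ u) ≤ u ⬝ᵥ (K *ᵥ u) := by
    intro u
    rw [hAv]
    have h1 := hA u u
    rw [Real.mul_self_sqrt (hnn u)] at h1
    have h2 := (abs_le.1 h1).1
    have h3 := mul_le_mul_of_nonneg_right hη (hnn u)
    nlinarith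
  have hdet : IsUnit K.det := by
    rw [isUnit_iff_ne_zero]
    intro h0
    obtain ⟨v, hv, hv0⟩ := Matrix.exists_mulVec_eq_zero_iff.2 h0
    have := hlow v
    rw [hv0, dotProduct_zero] at this
    have h1 : v ⬝ᵥ v ≤ 0 := by nlinarith
    exact hv (dotProduct_self_eq_zero.1 (le_antisymm h1 (hnn v)))
  refine ⟨hdet, ?_⟩
  intro w
  set u := (K⁻¹ - L⁻¹ • (1 : Matrix (Fin n) (Fin n) ℝ)) *ᵥ y with hu
  have hKu : K *ᵥ u = -((L⁻¹ • K - 1) *ᵥ y) := by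
    rw [hu, mulVec_mulVec, mul_sub, Matrix.mul_nonsing_inv _ hdet, Matrix.mul_smul, mul_one,
      ← neg_mulVec, neg_sub]
  have hw : w ⬝ᵥ w = u ⬝ᵥ (K *ᵥ u) := by
    simp only [w]
    rw [hK, ← mulVec_mulVec, dotProduct_mulVec u, ← mulVec_transpose]
  set a := Real.sqrt (u ⬝ᵥ u)
  set b := Real.sqrt (y ⬝ᵥ y)
  have ha2 : a ^ 2 = u ⬝ᵥ u := Real.sq_sqrt (hnn u)
  have hb2 : b ^ 2 = y ⬝ᵥ y := Real.sq_sqrt (hnn y)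
  have ha0 : 0 ≤ a := Real.sqrt_nonneg _
  have hb0 : 0 ≤ b := Real.sqrt_nonneg _
  have h1 : u ⬝ᵥ (K *ᵥ u) ≤ η * (a * b) := by
    rw [hKu, dotProduct_neg]
    exact (neg_le_abs _).trans (hA u y)
  have h2 := hlow u
  rw [← ha2] at h2
  have h3 : L * a ≤ 2 * η * b := by
    rcases ha0.eq_or_lt with h | h
    · rw [← h, mul_zero]; positivity
    · have : a * (L * a) ≤ a * (2 * η * b) := by nlinarith
      exact le_of_mul_le_mul_left this h
  rw [hw, ← hb2, le_div_iff₀ hL]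
  have h4 : (L * a) * (η * b) ≤ (2 * η * b) * (η * b) :=
    mul_le_mul_of_nonneg_right h3 (by positivity)
  nlinarith

theorem aux_lin_tail {Ω ι : Type*} [MeasurableSpace Ω] [Fintype ι] {μ : Measure Ω}
    [IsProbabilityMeasure μ] (Z : ι → Ω → ℝ)
    (hind : iIndepFun Z μ) (hZ : ∀ j, HasSubgaussianMGF (Z j) 1 μ) (u : ι → ℝ) (s τ : ℝ)
    (hs0 : 0 ≤ s) (hs : ∑ i, u i ^ 2 ≤ s) (hτ : 0 ≤ τ) :
    μ {ω | τ < |∑ i, u i * Z i ω|} ≤ ENNReal.ofReal (2 * Real.exp (-τ ^ 2 / (2 * s))) := by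
  have h := aux_lin Z hind hZ u
  have hh : HasSubgaussianMGF (fun ω => ∑ i, u i * Z i ω) (Real.toNNReal s) μ := by
    refine ⟨h.integrable_exp_mul, fun t => (h.mgf_le t).trans (Real.exp_le_exp.2 ?_)⟩
    gcongr
  have h1 := hh.measure_ge_le hτ
  have h2 := hh.neg.measure_ge_le hτ
  rw [Real.coe_toNNReal _ hs0] at h1 h2
  have hsub : {ω | τ < |∑ i, u i * Z i ω|} ⊆ {ω | τ ≤ ∑ i, u i * Z i ω} ∪
      {ω | τ ≤ (-fun ω => ∑ i, u i * Z i ω) ω} := by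
    intro ω hω
    rcases lt_abs.1 (show τ < |∑ i, u i * Z i ω| from hω) with h | h
    · exact Or.inl h.le
    · exact Or.inr h.le
  rw [← ofReal_measureReal]
  apply ENNReal.ofReal_le_ofReal
  refine (measureReal_mono hsub).trans ((measureReal_union_le _ _).trans ?_)
  linarith

theorem aux_fubini {Ω : Type*} [MeasurableSpace Ω] {μ : Measure Ω} [IsProbabilityMeasure μ]
    {α : Type*} [MeasurableSpace α] {d : ℕ}
    (A : Ω → α) (z : Ω → Fin d → ℝ) (hAm : Measurable A) (hzm : Measurable z)
    (hAz : IndepFun A z μ)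
    (hind : iIndepFun (fun j ω => z ω j) μ)
    (hZ : ∀ j, HasSubgaussianMGF (fun ω => z ω j) 1 μ)
    (w : α → Fin d → ℝ) (hw : ∀ j, Measurable fun a => w a j) (s τ : ℝ) (hs : 0 ≤ s)
    (hτ : 0 ≤ τ) :
    μ {ω | ∑ j, w (A ω) j ^ 2 ≤ s ∧ τ < |∑ j, w (A ω) j * z ω j|} ≤
      ENNReal.ofReal (2 * Real.exp (-τ ^ 2 / (2 * s))) := by
  let S : Set (α × (Fin d → ℝ)) := 
    {q | ∑ j, w q.1 j ^ 2 ≤ s} ∩ {q | τ < |∑ j, w q.1 j * q.2 j|}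
  have hwm : ∀ j, Measurable fun q : α × (Fin d → ℝ) => w q.1 j :=
    fun j => (hw j).comp measurable_fst
  have hS : MeasurableSet S := by
    refine MeasurableSet.inter (measurableSet_le ?_ measurable_const)
      (measurableSet_lt measurable_const ?_)
    · exact Finset.measurable_sum _ fun j _ => (hwm j).pow_const 2
    · exact continuous_abs.measurable.comp (Finset.measurable_sum _ fun j _ => (hwm j).mul
        ((measurable_pi_apply j).comp measurable_snd))
  have hmap := (indepFun_iff_map_prod_eq_prod_map_map hAm.aemeasurable hzm.aemeasurable).1 hAz
  have : IsProbabilityMeasure (μ.map A) := Measure.isProbabilityMeasure_map hAm.aemeasurable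
  have : IsProbabilityMeasure (μ.map z) := Measure.isProbabilityMeasure_map hzm.aemeasurable
  change μ ((fun ω => (A ω, z ω)) ⁻¹' S) ≤ _
  rw [← Measure.map_apply (hAm.prodMk hzm) hS, hmap, Measure.prod_apply hS]
  calc _ ≤ ∫⁻ a, ENNReal.ofReal (2 * Real.exp (-τ ^ 2 / (2 * s))) ∂(μ.map A) := by
        refine lintegral_mono fun a => ?_
        rw [Measure.map_apply hzm (measurable_prodMk_left hS)]
        by_cases ha : ∑ j, w a j ^ 2 ≤ s
        · refine (measure_mono ?_).trans
            (aux_lin_tail (fun j ω => z ω j) hind hZ (w a) s τ hs ha hτ)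
          intro ω hω
          exact hω.2
        · have : z ⁻¹' (Prod.mk a ⁻¹' S) = ∅ := by
            ext ω
            simp only [S, Set.mem_preimage, Set.mem_empty_iff_false, iff_false]
            intro h
            exact ha h.1
          rw [this]; simp
    _ = _ := by simp

theorem aux_rows_indep {Ω : Type*} [MeasurableSpace Ω] {μ : Measure Ω} [IsProbabilityMeasure μ]
    {n d : ℕ} (Z : Ω → Matrix (Fin (n + 1)) (Fin d) ℝ)
    (hm : ∀ i j, Measurable fun ω => Z ω i j)
    (h : iIndepFun (fun (p : Fin (n + 1) × Fin d) ω => Z ω p.1 p.2) μ) :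
    IndepFun (fun ω (i : Fin n) (j : Fin d) => Z ω i.castSucc j)
      (fun ω (j : Fin d) => Z ω (Fin.last n) j) μ := by
  classical
  let S : Finset (Fin (n + 1) × Fin d) := Finset.univ.filter fun p => p.1 ≠ Fin.last n
  let T : Finset (Fin (n + 1) × Fin d) := Finset.univ.filter fun p => p.1 = Fin.last n
  have hST : Disjoint S T := by
    rw [Finset.disjoint_left]
    intro p hp hq
    simp only [S, T, Finset.mem_filter] at hp hq
    exact hp.2 hq.2
  have h1 := h.indepFun_finset S T hST (fun p => hm p.1 p.2)
  let φ : (S → ℝ) → Fin n → Fin d → ℝ := fun f i j => f ⟨(i.castSucc, j), by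
      simp [S, Fin.castSucc_ne_last]⟩
  let ψ : (T → ℝ) → Fin d → ℝ := fun f j => f ⟨(Fin.last n, j), by simp [T]⟩
  have hφ : Measurable φ :=
    measurable_pi_lambda _ fun i => measurable_pi_lambda _ fun j => measurable_pi_apply _
  have hψ : Measurable ψ := measurable_pi_lambda _ fun j => measurable_pi_apply _
  exact h1.comp hφ hψ

/-- the random direction, as a function of the matrix -/
def auxW {n d : ℕ} (lam : Fin d → ℝ) (y : Fin n → ℝ) (A : Fin n → Fin d → ℝ) (j : Fin d) : ℝ :=
  let X : Matrix (Fin n) (Fin d) ℝ := Matrix.of fun i j => Real.sqrt (lam j) * A i j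
  Real.sqrt (lam j) *
    (Xᵀ *ᵥ (((X * Xᵀ)⁻¹ - (∑ j, lam j)⁻¹ • (1 : Matrix (Fin n) (Fin n) ℝ)) *ᵥ y)) j

theorem auxW_meas {n d : ℕ} (lam : Fin d → ℝ) (y : Fin n → ℝ) (j : Fin d) :
    Measurable fun A => auxW lam y A j := by
  have hX : Continuous fun A : Fin n → Fin d → ℝ =>
      (Matrix.of fun i j => Real.sqrt (lam j) * A i j : Matrix (Fin n) (Fin d) ℝ) := by
    refine continuous_matrix fun i j => ?_
    simp only [Matrix.of_apply]
    fun_prop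
  have hK := hX.matrix_mul hX.matrix_transpose
  have hinv : ∀ i k, Measurable fun A : Fin n → Fin d → ℝ =>
      ((Matrix.of fun i j => Real.sqrt (lam j) * A i j : Matrix (Fin n) (Fin d) ℝ) *
      (Matrix.of fun i j => Real.sqrt (lam j) * A i j : Matrix (Fin n) (Fin d) ℝ)ᵀ)⁻¹ i k := by
    intro i k
    simp only [Matrix.inv_def, Matrix.smul_apply, Ring.inverse_eq_inv', smul_eq_mul]
    exact (hK.matrix_det.measurable.inv).mul (hK.matrix_adjugate.matrix_elem i k).measurable
  unfold auxW
  simp only [mulVec, dotProduct, Matrix.sub_apply, Matrix.transpose_apply, Matrix.smul_apply]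
  refine Measurable.const_mul (Finset.measurable_sum _ fun i _ => Measurable.mul ?_
    (Finset.measurable_sum _ fun k _ => Measurable.mul_const ?_ _)) _
  · simp only [Matrix.of_apply]
    fun_prop
  · exact (hinv i k).sub_const _

theorem aux_netprob {Ω : Type*} [MeasurableSpace Ω] {μ : Measure Ω} [IsProbabilityMeasure μ]
    {n d : ℕ} (Z : Fin n → Fin d → Ω → ℝ) (hm : ∀ i j, Measurable (Z i j))
    (hind : iIndepFun (fun (p : Fin n × Fin d) ω => Z p.1 p.2 ω) μ)
    (hZ : ∀ i j, HasSubgaussianMGF (Z i j) 1 μ)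
    (h0 : ∀ i j, ∫ ω, Z i j ω ∂μ = 0) (h1 : ∀ i j, ∫ ω, Z i j ω ^ 2 ∂μ = 1)
    (N : Finset (EuclideanSpace ℝ (Fin n))) (hN1 : ∀ p ∈ N, ‖p‖ = 1)
    (lam : Fin d → ℝ) (M V t : ℝ) (hM : 0 < M) (hV : 0 < V)
    (ht : 0 < t) (hl0 : ∀ j, 0 < lam j) (hlM : ∀ j, lam j ≤ M) (hVe : V = ∑ j, lam j ^ 2) :
    μ.real (⋃ p ∈ N, {ω | 2056 * (Real.sqrt (V * t) + M * t) ≤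
        |∑ j, lam j * ((∑ i, p i * Z i j ω) ^ 2 - 1)|}) ≤ N.card * (2 * Real.exp (-t)) := by
  refine (measureReal_biUnion_finset_le _ _).trans ?_
  rw [← nsmul_eq_mul]
  refine Finset.sum_le_card_nsmul _ _ _ fun p hp => ?_
  have hp1 : ∑ i, p i ^ 2 = 1 := by
    have := hN1 p hp
    rw [EuclideanSpace.norm_eq, Real.sqrt_eq_one] at this
    simpa using this
  have hcol : ∀ j, iIndepFun (fun i => Z i j) μ := by
    intro j
    exact hind.precomp (g := fun i : Fin n => (i, j)) (by intro a b h; simpa using h)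
  have hgi : iIndepFun (fun j ω => ∑ i, p i * Z i j ω) μ :=
    (aux_group Z hm hind).comp (fun j x => ∑ i, p i * x i) (fun j => by fun_prop)
  have hb := fun σ hσ => aux_bernstein (fun j ω => ∑ i, p i * Z i j ω)
    (fun j => by fun_prop) hgi
    (fun j => by
      have := aux_lin (fun i => Z i j) (hcol j) (fun i => hZ i j) p
      rw [hp1] at this
      simpa using this)
    (fun j => by
      rw [aux_lin_var (fun i => Z i j) (hcol j) (fun i => hZ i j) (fun i => h0 i j)
        (fun i => h1 i j) p, hp1]) lam M V t σ hM hV ht hσ hl0 hlM hVe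
  have b1 := hb 1 (by simp)
  have b2 := hb (-1) (by simp)
  refine (measureReal_mono ?_).trans ((measureReal_union_le _ _).trans
    ((add_le_add b1 b2).trans_eq (two_mul _).symm))
  intro ω hω
  rw [Set.mem_ofPred_eq] at hω
  rcases le_abs.1 hω with h | h
  · left; simpa using h
  · right; simpa using h

theorem aux_quad {n d : ℕ} (lam : Fin d → ℝ) (hl : ∀ j, 0 < lam j)
    (A : Fin n → Fin d → ℝ) (X : Matrix (Fin n) (Fin d) ℝ)
    (hX : ∀ i j, X i j = Real.sqrt (lam j) * A i j) (p : Fin n → ℝ) (hp : p ⬝ᵥ p = 1)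
    (L : ℝ) (hL : 0 < L) (hLe : L = ∑ j, lam j) :
    p ⬝ᵥ ((L⁻¹ • (X * Xᵀ) - 1) *ᵥ p) = (∑ j, lam j * ((∑ i, p i * A i j) ^ 2 - 1)) / L := by
  rw [sub_mulVec, smul_mulVec, one_mulVec, dotProduct_sub, dotProduct_smul, smul_eq_mul, hp]
  have h1 : p ⬝ᵥ ((X * Xᵀ) *ᵥ p) = ∑ j, lam j * (∑ i, p i * A i j) ^ 2 := by
    rw [← mulVec_mulVec, dotProduct_mulVec p, ← mulVec_transpose]
    simp only [dotProduct]
    refine Finset.sum_congr rfl fun j _ => ?_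
    have : (Xᵀ *ᵥ p) j = Real.sqrt (lam j) * ∑ i, p i * A i j := by
      simp only [mulVec, dotProduct, Matrix.transpose_apply, hX, Finset.mul_sum]
      refine Finset.sum_congr rfl fun i _ => by ring
    rw [this]
    have := Real.mul_self_sqrt (hl j).le
    linear_combination (∑ i, p i * A i j) ^ 2 * this
  rw [h1]
  simp only [mul_sub, Finset.sum_sub_distrib, mul_one, ← hLe]
  field_simp

theorem aux_final_id {n d : ℕ} (lam : Fin d → ℝ) 
    (A : Fin n → Fin d → ℝ) (X : Matrix (Fin n) (Fin d) ℝ)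
    (hX : ∀ i j, X i j = Real.sqrt (lam j) * A i j) (y : Fin n → ℝ) (z x' : Fin d → ℝ)
    (hx : ∀ j, x' j = Real.sqrt (lam j) * z j) :
    y ⬝ᵥ (((X * Xᵀ)⁻¹ - (∑ j, lam j)⁻¹ • (1 : Matrix (Fin n) (Fin n) ℝ)) *ᵥ (X *ᵥ x')) =
      ∑ j, auxW lam y A j * z j := by
  have hXe : (Matrix.of fun i j => Real.sqrt (lam j) * A i j) = X := by
    ext i j; simp [hX]
  set B := (X * Xᵀ)⁻¹ - (∑ j, lam j)⁻¹ • (1 : Matrix (Fin n) (Fin n) ℝ) with hB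
  have hBt : Bᵀ = B := by
    rw [hB, transpose_sub, transpose_nonsing_inv, transpose_mul, transpose_transpose,
      transpose_smul, transpose_one]
  rw [dotProduct_mulVec, ← mulVec_transpose, hBt, dotProduct_mulVec, ← mulVec_transpose]
  simp only [dotProduct, auxW, hXe, hx]
  refine Finset.sum_congr rfl fun j _ => ?_
  ring

theorem auxW_sq {n d : ℕ} (lam : Fin d → ℝ) (hl : ∀ j, 0 < lam j) (M : ℝ) (hM : ∀ j, lam j ≤ M)
    (A : Fin n → Fin d → ℝ) (X : Matrix (Fin n) (Fin d) ℝ)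
    (hX : ∀ i j, X i j = Real.sqrt (lam j) * A i j) (y : Fin n → ℝ) :
    let w := Xᵀ *ᵥ (((X * Xᵀ)⁻¹ - (∑ j, lam j)⁻¹ • (1 : Matrix (Fin n) (Fin n) ℝ)) *ᵥ y)
    ∑ j, auxW lam y A j ^ 2 ≤ M * (w ⬝ᵥ w) := by
  intro w
  have hXe : (Matrix.of fun i j => Real.sqrt (lam j) * A i j) = X := by
    ext i j; simp [hX]
  simp only [auxW, hXe, dotProduct, Finset.mul_sum]
  refine Finset.sum_le_sum fun j _ => ?_
  change (Real.sqrt (lam j) * w j) ^ 2 ≤ _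
  rw [mul_pow, Real.sq_sqrt (hl j).le, ← sq]
  exact mul_le_mul_of_nonneg_right (hM j) (sq_nonneg _)

/-- numerical part -/
theorem aux_num (L V M m t : ℝ) (hL : 0 < L) (hV : 0 < V) (hM : 0 < M) (hm : 0 < m)
    (ht : 0 < t) (htm : t ≤ 3 * m) (hVM : V ≤ M * L)
    (hd : (4 * 203544) ^ 2 * m ≤ L / M) :
    33 * (2056 * (Real.sqrt (V * t) + M * t) / L) ≤
        203544 * (Real.sqrt (m / (L ^ 2 / V)) + m / (L / M)) ∧
      203544 * (Real.sqrt (m / (L ^ 2 / V)) + m / (L / M)) ≤ 1 / 2 := by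
  have e1 : Real.sqrt (m / (L ^ 2 / V)) = Real.sqrt (V * m) / L := by
    rw [show m / (L ^ 2 / V) = V * m / L ^ 2 by field_simp, Real.sqrt_div (by positivity),
      Real.sqrt_sq hL.le]
  have e2 : m / (L / M) = M * m / L := by field_simp
  constructor
  · rw [e1, e2]
    have h1 : Real.sqrt (V * t) ≤ 3 * Real.sqrt (V * m) := by
      rw [← Real.sqrt_sq (show (0:ℝ) ≤ 3 by norm_num), ← Real.sqrt_mul (by positivity)]
      apply Real.sqrt_le_sqrt
      nlinarith [mul_pos hV hm, mul_le_mul_of_nonneg_left htm hV.le]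
    have h2 : M * t ≤ 3 * (M * m) := by nlinarith
    rw [← add_div, ← mul_div_assoc, ← mul_div_assoc]
    apply div_le_div_of_nonneg_right _ hL.le
    linarith [Real.sqrt_nonneg (V * m), mul_pos hM hm]
  · have h1 : m / (L / M) ≤ (1 / (4 * 203544)) ^ 2 := by
      rw [div_le_iff₀ (by positivity)]
      nlinarith
    have h2 : m / (L ^ 2 / V) ≤ m / (L / M) := by
      apply div_le_div_of_nonneg_left hm.le (by positivity)
      rw [div_le_div_iff₀ hM hV]; nlinarith
    have h3 : Real.sqrt (m / (L ^ 2 / V)) ≤ 1 / (4 * 203544) := by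
      rw [← Real.sqrt_sq (show (0:ℝ) ≤ 1 / (4 * 203544) by norm_num)]
      exact Real.sqrt_le_sqrt (h2.trans h1)
    norm_num at h1 h3 ⊢
    linarith

theorem aux_delta (n : ℕ) (k : ℕ) (hk : k ≤ 5 ^ n) (δ : ℝ) (h0 : 0 < δ) (h1 : δ < 1 / 2) :
    k * (2 * Real.exp (-(2 * n + 3 * Real.log (1 / δ)))) ≤ δ / 2 := by
  have e : Real.exp (-(2 * n + 3 * Real.log (1 / δ))) = (Real.exp 2 ^ n)⁻¹ * δ ^ 3 := by
    rw [neg_add, Real.exp_add, Real.exp_neg, one_div, Real.log_inv, ← Real.exp_nat_mul,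
      mul_comm (2:ℝ)]
    congr 1
    rw [mul_neg, neg_neg, show (3:ℝ) * Real.log δ = (3:ℕ) * Real.log δ by norm_num,
      Real.exp_nat_mul, Real.exp_log h0]
  have h5 : (5:ℝ) ≤ Real.exp 2 := by
    have := Real.exp_one_gt_d9
    have e : Real.exp 2 = Real.exp 1 * Real.exp 1 := by rw [← Real.exp_add]; norm_num
    rw [e]; nlinarith
  have hk' : (k : ℝ) ≤ Real.exp 2 ^ n := by
    calc (k : ℝ) ≤ (5:ℝ) ^ n := by exact_mod_cast hk
      _ ≤ _ := by gcongr
  have hp : 0 < Real.exp 2 ^ n := by positivity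
  rw [e]
  have : (k : ℝ) * (Real.exp 2 ^ n)⁻¹ ≤ 1 := by
    rw [← div_eq_mul_inv, div_le_one hp]; exact hk'
  have hd : 2 * δ ^ 3 ≤ δ / 2 := by nlinarith [mul_pos h0 h0]
  calc _ = ((k : ℝ) * (Real.exp 2 ^ n)⁻¹) * (2 * δ ^ 3) := by ring
    _ ≤ 1 * (2 * δ ^ 3) := by gcongr
    _ ≤ _ := by linarith

theorem aux_delta2 (n δ D H : ℝ) (hn : 0 < n) (hD : 0 < D) (hH : 0 < H)
    (h0 : 0 < δ) (h1 : δ < 1 / 2) :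
    2 * Real.exp (-(4 * 203544 * Real.sqrt (n * Real.log (1 / δ) / D) * H) ^ 2 /
      (2 * (2 * (203544 * H) ^ 2 * n / D))) ≤ δ / 2 := by
  have hl : 0 < Real.log (1 / δ) := Real.log_pos (by rw [lt_div_iff₀ h0]; linarith)
  have e : -(4 * 203544 * Real.sqrt (n * Real.log (1 / δ) / D) * H) ^ 2 /
      (2 * (2 * (203544 * H) ^ 2 * n / D)) = -(4 * Real.log (1 / δ)) := by
    rw [mul_pow, mul_pow, Real.sq_sqrt (by positivity)]
    field_simp
    ring
  rw [e, one_div, Real.log_inv, mul_neg, neg_neg,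
    show (4:ℝ) * Real.log δ = (4:ℕ) * Real.log δ by norm_num, Real.exp_nat_mul, Real.exp_log h0]
  have hd : δ ^ 3 ≤ (1/2) ^ 3 := by gcongr
  nlinarith

/-- Lemma 1 (e1): bounded difference between the leave-one-out term with `K⁻¹` and with the
scaled identity.  The joint sample of size `n+1` consists of an independent pair of a size-`n`
sample `X` (the first `n` rows) and a size-1 sample `x′` (the last row). -/
theorem stmt6 :
    ∃ c > (0 : ℝ), ∃ c₃ > (0 : ℝ),
      ∀ (Ω : Type*) (_ : MeasurableSpace Ω) (μ : Measure Ω), IsProbabilityMeasure μ →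
      ∀ (n d : ℕ), 0 < n → 0 < d →
      ∀ (lam : Fin d → ℝ) (Z W : Ω → Matrix (Fin (n + 1)) (Fin d) ℝ) (y : Fin (n + 1) → ℝ),
        IsAnisoSample μ lam Z W y →
      ∀ δ : ℝ, 0 < δ → δ < 1 / 2 →
        c₃ * (n + Real.log (1 / δ)) ≤ dimInf lam →
        ENNReal.ofReal (1 - δ) ≤
          μ {ω |
              -- `X` = first `n` rows, `x′` = last row, `K = X Xᵀ`
              let X : Matrix (Fin n) (Fin d) ℝ := (W ω).submatrix Fin.castSucc id
              let x' : Fin d → ℝ := W ω (Fin.last n)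
              IsUnit (X * Xᵀ).det ∧
              |(fun i : Fin n => y i.castSucc) ⬝ᵥ
                  (((X * Xᵀ)⁻¹ - (∑ j, lam j)⁻¹ • (1 : Matrix (Fin n) (Fin n) ℝ)) *ᵥ
                    (X *ᵥ x'))| ≤
                c * Real.sqrt (n * Real.log (1 / δ) / dimInf lam) *
                  (Real.sqrt ((n + Real.log (1 / δ)) / dim2 lam) +
                    (n + Real.log (1 / δ)) / dimInf lam)} := by
  refine ⟨4 * 203544, by norm_num, (4 * 203544) ^ 2, by norm_num, ?_⟩
  intro Ω _ μ hμ n d hn hd lam Z W y hS δ hδ0 hδ1 hdim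
  have hne : Nonempty (Fin d) := ⟨⟨0, hd⟩⟩
  set ℓ := Real.log (1 / δ) with hℓ
  have hℓ0 : 0 < ℓ := Real.log_pos (by rw [lt_div_iff₀ hδ0]; linarith)
  have hn' : (0 : ℝ) < n := by exact_mod_cast hn
  set L := ∑ j, lam j with hLdef
  set V := ∑ j, lam j ^ 2 with hVdef
  set M := ⨆ j, lam j with hMdef
  have hlM : ∀ j, lam j ≤ M := fun j => le_ciSup (Set.finite_range lam).bddAbove j
  have hl0 := hS.lam_pos
  have hL : 0 < L := Finset.sum_pos (fun j _ => hl0 j) Finset.univ_nonempty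
  have hV : 0 < V := Finset.sum_pos (fun j _ => pow_pos (hl0 j) 2) Finset.univ_nonempty
  have hM : 0 < M := (hl0 ⟨0, hd⟩).trans_le (hlM _)
  have hVM : V ≤ M * L := by
    rw [hVdef, hLdef, Finset.mul_sum]
    refine Finset.sum_le_sum fun j _ => ?_
    rw [sq]; exact mul_le_mul_of_nonneg_right (hlM j) (hl0 j).le
  have hD : dimInf lam = L / M := rfl
  have hD2 : dim2 lam = L ^ 2 / V := rfl
  rw [hD, hD2]
  rw [hD] at hdim
  set m := (n : ℝ) + ℓ with hm
  have hm0 : 0 < m := by positivity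
  set t := 2 * (n : ℝ) + 3 * ℓ with ht
  have ht0 : 0 < t := by positivity
  set H := Real.sqrt (m / (L ^ 2 / V)) + m / (L / M) with hH
  have hH0 : 0 < H := by positivity
  obtain ⟨num1, num2⟩ := aux_num L V M m t hL hV hM hm0 ht0 (by rw [ht, hm]; linarith) hVM hdim
  have hsub : ∀ i j, HasSubgaussianMGF (fun ω => Z ω i j) 1 μ := fun i j =>
    ⟨hS.subg_int i j, fun s => by
      have := hS.subg i j s
      simpa [mgf] using this⟩
  obtain ⟨N, hNc, hN1, hN⟩ := aux_net n
  set y' : Fin n → ℝ := fun i => y i.castSucc with hy'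
  have hyy : y' ⬝ᵥ y' = n := by
    simp only [dotProduct]
    have : ∀ i, y' i * y' i = 1 := by
      intro i
      rcases hS.labels i.castSucc with h | h <;> simp [y', h]
    simp [this]
  -- the two bad events
  set B1 : Set Ω := ⋃ p ∈ N, {ω | 2056 * (Real.sqrt (V * t) + M * t) ≤
        |∑ j, lam j * ((∑ i : Fin n, p i * Z ω i.castSucc j) ^ 2 - 1)|} with hB1
  have hB1le : μ B1 ≤ ENNReal.ofReal (δ / 2) := by
    rw [← ofReal_measureReal (measure_ne_top μ B1)]
    apply ENNReal.ofReal_le_ofReal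
    refine (aux_netprob (fun (i : Fin n) j ω => Z ω i.castSucc j) (fun i j => hS.meas _ _)
      (hS.indep.precomp (g := fun p : Fin n × Fin d => (p.1.castSucc, p.2)) ?_)
      (fun i j => hsub _ _) (fun i j => hS.mean_zero _ _) (fun i j => hS.var_one _ _) N hN1
      lam M V t hM hV ht0 hl0 hlM hVdef).trans (aux_delta n N.card hNc δ hδ0 hδ1)
    rintro ⟨a, b⟩ ⟨c, e⟩ h
    simpa using h
  set A : Ω → Fin n → Fin d → ℝ := fun ω i j => Z ω i.castSucc j with hA
  set z : Ω → Fin d → ℝ := fun ω j => Z ω (Fin.last n) j with hz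
  set s := 2 * (203544 * H) ^ 2 * n / (L / M) with hs
  set τ := 4 * 203544 * Real.sqrt (n * ℓ / (L / M)) * H with hτ
  set B2 : Set Ω := {ω | ∑ j, auxW lam y' (A ω) j ^ 2 ≤ s ∧
    τ < |∑ j, auxW lam y' (A ω) j * z ω j|} with hB2
  have hB2le : μ B2 ≤ ENNReal.ofReal (δ / 2) := by
    refine (aux_fubini A z
      (measurable_pi_lambda _ fun i => measurable_pi_lambda _ fun j => hS.meas _ _)
      (measurable_pi_lambda _ fun j => hS.meas _ _)
      (aux_rows_indep Z hS.meas hS.indep)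
      (hS.indep.precomp (g := fun j : Fin d => (Fin.last n, j)) ?_)
      (fun j => hsub _ _) (auxW lam y') (auxW_meas lam y') s τ (by positivity)
      (by positivity)).trans (ENNReal.ofReal_le_ofReal
        (aux_delta2 n δ (L / M) H hn' (by positivity) hH0 hδ0 hδ1))
    intro a b h
    simpa using h
  -- outside the bad events everything holds
  have hcover : (Set.univ : Set Ω) ⊆ {ω |
              let X : Matrix (Fin n) (Fin d) ℝ := (W ω).submatrix Fin.castSucc id
              let x' : Fin d → ℝ := W ω (Fin.last n)
              IsUnit (X * Xᵀ).det ∧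
              |y' ⬝ᵥ
                  (((X * Xᵀ)⁻¹ - L⁻¹ • (1 : Matrix (Fin n) (Fin n) ℝ)) *ᵥ
                    (X *ᵥ x'))| ≤ τ} ∪ (B1 ∪ B2) := by
    intro ω _
    by_cases hb1 : ω ∈ B1
    · exact Or.inr (Or.inl hb1)
    by_cases hb2 : ω ∈ B2
    · exact Or.inr (Or.inr hb2)
    left
    rw [Set.mem_ofPred_eq]
    intro X x'
    have hX : ∀ i j, X i j = Real.sqrt (lam j) * A ω i j := fun i j => hS.X_eq ω i.castSucc j
    have hx : ∀ j, x' j = Real.sqrt (lam j) * z ω j := fun j => hS.X_eq ω (Fin.last n) j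
    set ρ := 2056 * (Real.sqrt (V * t) + M * t) / L with hρ
    have hnet : ∀ p ∈ N, |p.ofLp ⬝ᵥ ((L⁻¹ • (X * Xᵀ) - 1) *ᵥ p.ofLp)| ≤ ρ := by
      intro p hp
      have hpp : p.ofLp ⬝ᵥ p.ofLp = 1 := by
        have := hN1 p hp
        rw [EuclideanSpace.norm_eq, Real.sqrt_eq_one] at this
        simpa [dotProduct, sq] using this
      rw [aux_quad lam hl0 (A ω) X hX p.ofLp hpp L hL hLdef, abs_div, abs_of_pos hL, hρ]
      gcongr
      by_contra hcon
      push Not at hcon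
      apply hb1
      rw [hB1]
      simp only [Set.mem_iUnion]
      exact ⟨p, hp, hcon.le⟩
    have hsymm : (L⁻¹ • (X * Xᵀ) - 1 : Matrix (Fin n) (Fin n) ℝ)ᵀ = L⁻¹ • (X * Xᵀ) - 1 := by
      rw [transpose_sub, transpose_smul, transpose_mul, transpose_transpose, transpose_one]
    have hbil := aux_net_matrix hn N hN1 hN _ hsymm ρ hnet
    obtain ⟨hunit, hw⟩ := aux_det X L (203544 * H) hL (by positivity) num2 y' (fun u v =>
      (hbil u v).trans (mul_le_mul_of_nonneg_right num1 (by positivity)))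
    refine ⟨hunit, ?_⟩
    rw [aux_final_id lam (A ω) X hX y' (z ω) x' hx]
    by_contra hcon
    push Not at hcon
    refine hb2 ⟨?_, hcon⟩
    refine (auxW_sq lam hl0 M hlM (A ω) X hX y').trans ?_
    rw [hyy] at hw
    calc _ ≤ M * (2 * (203544 * H) ^ 2 * n / L) := mul_le_mul_of_nonneg_left hw hM.le
      _ = s := by rw [hs]; field_simp
  have hfin := (measure_mono hcover).trans ((measure_union_le _ _).trans
    (add_le_add_right ((measure_union_le B1 B2).trans (add_le_add hB1le hB2le)) _))
  rw [measure_univ, ← ENNReal.ofReal_add (by positivity) (by positivity), add_halves] at hfin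
  rw [ENNReal.ofReal_sub _ hδ0.le, ENNReal.ofReal_one]
  exact tsub_le_iff_right.2 hfin

end
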